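/- arXiv:1508.07243 — 2 statements merged into one kernel-verified Lean document; each statement's English description precedes it below -/
import Mathlib

section
/- For every γ ∈ (0,∞), the Huber regularisation φ_γ : ℝ^m → ℝ is everywhere differentiable, and its gradient at every point g ∈ ℝ^m equals h_γ(g). -/
/-- The Huber regularisation of the Euclidean norm. -/
noncomputable def huber (γ : ℝ) {m : ℕ} (g : EuclideanSpace ℝ (Fin m)) : ℝ :=
  if 1 / γ ≤ ‖g‖ then ‖g‖ - 1 / (2 * γ) else γ / 2 * ‖g‖ ^ 2

/-- The map `h_γ`, the gradient of the Huber regularisation: `h_γ(g) = γ g` if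
`‖g‖ ≤ 1/γ` and `h_γ(g) = g/‖g‖` if `‖g‖ ≥ 1/γ`. -/
noncomputable def huberGrad (γ : ℝ) {m : ℕ} (g : EuclideanSpace ℝ (Fin m)) :
    EuclideanSpace ℝ (Fin m) :=
  if ‖g‖ ≤ 1 / γ then γ • g else ‖g‖⁻¹ • g


theorem huber_aux_quad (γ : ℝ) {m : ℕ} (g : EuclideanSpace ℝ (Fin m)) :
    HasFDerivAt (fun y : EuclideanSpace ℝ (Fin m) => γ / 2 * ‖y‖ ^ 2)
      (InnerProductSpace.toDual ℝ _ (γ • g)) g := by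
  have h := ((hasStrictFDerivAt_norm_sq g).hasFDerivAt).const_mul (γ / 2)
  refine h.congr_fderiv ?_
  ext v
  simp
  ring

theorem huber_aux_norm (c : ℝ) {m : ℕ} (g : EuclideanSpace ℝ (Fin m)) (hg : 0 < ‖g‖) :
    HasFDerivAt (fun y : EuclideanSpace ℝ (Fin m) => ‖y‖ - c)
      (InnerProductSpace.toDual ℝ _ (‖g‖⁻¹ • g)) g := by
  have h := (((hasStrictFDerivAt_norm_sq g).hasFDerivAt).sqrt (by positivity)).sub_const c
  simp only [Real.sqrt_sq (norm_nonneg _)] at h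
  refine h.congr_fderiv ?_
  ext v
  simp
  field_simp

/-- The Huber regularisation is everywhere differentiable with gradient `h_γ`. -/
theorem huber_hasGradient (γ : ℝ) (hγ : 0 < γ) (m : ℕ)
    (g : EuclideanSpace ℝ (Fin m)) :
    HasGradientAt (huber γ) (huberGrad γ g) g := by
  rw [hasGradientAt_iff_hasFDerivAt]
  have hpos : 0 < 1 / γ := by positivity
  have hQ : ∀ y : EuclideanSpace ℝ (Fin m), ‖y‖ ≤ 1 / γ → huber γ y = γ / 2 * ‖y‖ ^ 2 := by
    intro y hy
    unfold huber
    split_ifs with h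
    · rw [le_antisymm hy h]
      field_simp
      ring
    · rfl
  have hN : ∀ y : EuclideanSpace ℝ (Fin m), 1 / γ ≤ ‖y‖ →
      huber γ y = ‖y‖ - 1 / (2 * γ) := fun y hy => if_pos hy
  rcases lt_trichotomy ‖g‖ (1 / γ) with h | h | h
  · rw [huberGrad, if_pos h.le]
    refine (huber_aux_quad γ g).congr_of_eventuallyEq ?_
    filter_upwards [continuous_norm.continuousAt.eventually_lt continuousAt_const h] with y hy
    exact hQ y (le_of_lt hy)
  · have e : ‖g‖⁻¹ • g = γ • g := by rw [h]; simp
    rw [huberGrad, if_pos h.le]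
    have h1 := (huber_aux_quad γ g).hasFDerivWithinAt (s := {y | ‖y‖ ≤ 1 / γ})
    have h2 := (huber_aux_norm (1 / (2 * γ)) g (h ▸ hpos)).hasFDerivWithinAt
      (s := {y | 1 / γ ≤ ‖y‖})
    rw [e] at h2
    have h3 := (h1.congr (f₁ := huber γ) hQ (hQ g h.le)).union
      (h2.congr (f₁ := huber γ) hN (hN g h.ge))
    have hu : ({y | ‖y‖ ≤ 1 / γ} ∪ {y | 1 / γ ≤ ‖y‖} : Set (EuclideanSpace ℝ (Fin m)))
        = Set.univ := by
      ext y
      simpa using le_total ‖y‖ γ⁻¹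
    rwa [hu, hasFDerivWithinAt_univ] at h3
  · rw [huberGrad, if_neg (not_le.2 h)]
    refine (huber_aux_norm (1 / (2 * γ)) g (hpos.trans h)).congr_of_eventuallyEq ?_
    filter_upwards [continuousAt_const.eventually_lt continuous_norm.continuousAt h] with y hy
    exact hN y (le_of_lt hy)
end

section
/- Let γ ∈ (0,∞) and let g ∈ ℝ^m satisfy ‖g‖ ≠ 1/γ. Then the map h_γ : ℝ^m → ℝ^m is Fréchet differentiable at g, and its derivative D = h′_γ(g) is positive semidefinite: ⟨D v, v⟩ ≥ 0 for every v ∈ ℝ^m. Explicitly, D = γ·Id if ‖g‖ < 1/γ, and D v = (v − ⟨g/‖g‖, v⟩ g/‖g‖)/‖g‖ if ‖g‖ > 1/γ. -/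
open scoped RealInnerProductSpace

/-- At every point `g` with `‖g‖ ≠ 1/γ`, the map `h_γ` is Fréchet differentiable,
its derivative `D` is positive semidefinite, and `D` is given explicitly by
`D = γ·Id` if `‖g‖ < 1/γ` and `D v = (v − ⟨g/‖g‖, v⟩ g/‖g‖)/‖g‖` if `‖g‖ > 1/γ`. -/
theorem huberGrad_hasFDerivAt (γ : ℝ) (hγ : 0 < γ) (m : ℕ)
    (g : EuclideanSpace ℝ (Fin m)) (hg : ‖g‖ ≠ 1 / γ) :
    ∃ D : EuclideanSpace ℝ (Fin m) →L[ℝ] EuclideanSpace ℝ (Fin m),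
      HasFDerivAt (huberGrad γ) D g ∧
      (∀ v : EuclideanSpace ℝ (Fin m), 0 ≤ ⟪D v, v⟫) ∧
      (‖g‖ < 1 / γ → ∀ v : EuclideanSpace ℝ (Fin m), D v = γ • v) ∧
      (1 / γ < ‖g‖ → ∀ v : EuclideanSpace ℝ (Fin m),
        D v = ‖g‖⁻¹ • (v - ⟪‖g‖⁻¹ • g, v⟫ • (‖g‖⁻¹ • g))) := by
  rcases lt_or_gt_of_ne hg with h | h
  · refine ⟨γ • ContinuousLinearMap.id ℝ _, ?_, ?_, ?_, ?_⟩
    · have h1 : HasFDerivAt (fun x : EuclideanSpace ℝ (Fin m) => γ • x)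
          (γ • ContinuousLinearMap.id ℝ _) g := (hasFDerivAt_id g).const_smul γ
      refine h1.congr_of_eventuallyEq ?_
      filter_upwards [continuous_norm.continuousAt.eventually_lt continuousAt_const h] with x hx
      simp only [huberGrad]
      rw [if_pos hx.le]
    · intro v
      simp only [smul_apply, ContinuousLinearMap.id_apply,
        real_inner_smul_left, real_inner_self_eq_norm_sq]
      positivity
    · intro _ v
      simp
    · intro h'
      exact absurd h' (not_lt.mpr h.le)
  · have hpos : 0 < ‖g‖ := lt_trans (by positivity) h
    have hn : HasFDerivAt (fun x : EuclideanSpace ℝ (Fin m) => ‖x‖)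
        (‖g‖⁻¹ • innerSL ℝ g) g := by
      have h1 := (hasStrictFDerivAt_norm_sq g).hasFDerivAt.sqrt (pow_ne_zero 2 hpos.ne')
      simp only [Real.sqrt_sq (norm_nonneg _)] at h1
      refine h1.congr_fderiv ?_
      ext v
      simp
      field_simp
    have hi := (hasDerivAt_inv hpos.ne').comp_hasFDerivAt g hn
    have hs := hi.smul (hasFDerivAt_id g)
    have key : ∀ v : EuclideanSpace ℝ (Fin m),
        (‖g‖⁻¹ • (ContinuousLinearMap.id ℝ (EuclideanSpace ℝ (Fin m)) -
          (innerSL ℝ (‖g‖⁻¹ • g)).smulRight (‖g‖⁻¹ • g))) v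
        = ‖g‖⁻¹ • (v - ⟪‖g‖⁻¹ • g, v⟫ • (‖g‖⁻¹ • g)) := by
      intro v
      simp [real_inner_smul_left]
    refine ⟨_, ?_, ?_, ?_, fun _ => key⟩
    · have h2 : HasFDerivAt (fun x : EuclideanSpace ℝ (Fin m) => ‖x‖⁻¹ • x) _ g := hs
      refine (h2.congr_of_eventuallyEq ?_).congr_fderiv ?_
      · filter_upwards [continuousAt_const.eventually_lt continuous_norm.continuousAt h] with x hx
        simp only [huberGrad]
        rw [if_neg (not_le.mpr hx)]
      · refine ContinuousLinearMap.ext fun v => ?_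
        rw [key]
        simp only [add_apply, smul_apply,
          ContinuousLinearMap.smulRight_apply, ContinuousLinearMap.id_apply, innerSL_apply_apply,
          real_inner_smul_left, id, smul_eq_mul, Function.comp_apply, smul_add, smul_smul, sub_eq_add_neg, ← neg_smul]
        congr 2
        field_simp
    · intro v
      rw [key, real_inner_smul_left, inner_sub_left, real_inner_smul_left,
        real_inner_self_eq_norm_sq]
      have hu : ‖‖g‖⁻¹ • g‖ = 1 := by
        rw [norm_smul, norm_inv, norm_norm, inv_mul_cancel₀ hpos.ne']
      have hc := abs_real_inner_le_norm (‖g‖⁻¹ • g) v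
      rw [hu, one_mul] at hc
      have hc2 := sq_le_sq' (abs_le.mp hc).1 (abs_le.mp hc).2
      refine mul_nonneg (by positivity) ?_
      nlinarith
    · intro h'
      exact absurd h' (not_lt.mpr (le_of_lt h))
end
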